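/- For all real numbers x > 0 and y > 0, |x·sin(1/x) − y·sin(1/y)| ≤ √(2·|x − y|). -/

import Mathlib

/-!
Write `f x = x * sin (1 / x)`, the imaginary part of the spiral `x * exp (i / x)`. For nearby
points, `|f x - f y|` is at most the chord of the spiral, which the law of cosines and
`1 - cos t ≤ 3 / 4 * t` control as long as `|x - y| ≤ 1 / 2`. For `y + 1 / 2 ≤ x`, the difference
`D = f x - f y` can only exceed `1` when `m = -f y` is positive. Then `0 < D - 1 ≤ m`, so
`D ^ 2 ≤ 2 * D - 1 + m ^ 2`, and with `f x ≤ x` the claim reduces to `(1 + m) ^ 2 ≤ 2 * (1 - y)`.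
This follows from `m ≤ y` and the same cosine inequality at `t = 1 / y - π / 2`.
-/

section

open Real

lemma cos_add_sin_le_one_add {t : ℝ} (ht : -1 ≤ t) : cos t + sin t ≤ 1 + t := by
  rcases le_total 0 t with h | h
  · linarith [cos_le_one t, sin_le h]
  · have hsin : sin t ≤ t - t ^ 3 / 6 := by
      have := sin_ge_sub_cube (neg_nonneg.2 h)
      rw [sin_neg] at this
      linarith
    have hcos : cos t ≤ 1 - t ^ 2 / 6 := by
      have hquad := cos_le_one_sub_mul_cos_sq
        (abs_le.2 ⟨by linarith [pi_gt_three], by linarith [pi_pos]⟩ : |t| ≤ π)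
      have hcoeff : 1 / 6 ≤ 2 / π ^ 2 := by
        rw [div_le_div_iff₀ (by norm_num) (by positivity)]
        nlinarith [pi_pos, pi_lt_d2]
      nlinarith [mul_le_mul_of_nonneg_right hcoeff (sq_nonneg t)]
    nlinarith [mul_nonneg (sq_nonneg t) (by linarith : 0 ≤ 1 + t)]

lemma one_sub_cos_le {t : ℝ} (ht : 0 ≤ t) : 1 - cos t ≤ 3 / 4 * t := by
  rcases le_total t (3 / 2) with h | h
  · nlinarith [one_sub_sq_div_two_le_cos (x := t)]
  · -- Beyond `3 / 2`, the tangent line of `1 - cos` at `3 * π / 4` lies below `3 / 4 * t`.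
    have hs : -1 ≤ t - 3 * π / 4 := by linarith [pi_lt_d2]
    have hcos : cos t = -(√2 / 2) * (cos (t - 3 * π / 4) + sin (t - 3 * π / 4)) := by
      have hshift : cos (t - 3 * π / 4 - π / 4) = -cos t := by
        rw [← cos_sub_pi]
        ring_nf
      rw [cos_sub, cos_pi_div_four, sin_pi_div_four] at hshift
      linarith
    have hsqrt : √2 / 2 ≤ 0.7072 := by
      have : √2 ≤ 1.4144 := sqrt_le_left (by norm_num) |>.2 (by norm_num)
      linarith
    have htangent : 1 - cos t ≤ 1 + 0.7072 * (1 + (t - 3 * π / 4)) := by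
      rw [hcos]
      nlinarith [cos_add_sin_le_one_add hs, sqrt_nonneg 2]
    linarith [pi_gt_d4]

lemma sq_mul_sin_sub_mul_sin_le (r s a b : ℝ) :
    (r * sin a - s * sin b) ^ 2 ≤ (r - s) ^ 2 + 2 * (r * s) * (1 - cos (a - b)) := by
  have hdiff : (r - s) ^ 2 + 2 * (r * s) * (1 - cos (a - b)) - (r * sin a - s * sin b) ^ 2
      = (r * cos a - s * cos b) ^ 2 := by
    rw [cos_sub]
    linear_combination (-r ^ 2) * sin_sq_add_cos_sq a - s ^ 2 * sin_sq_add_cos_sq b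
  linarith [sq_nonneg (r * cos a - s * cos b)]

lemma sq_mul_sin_one_div_sub_le_mul_add {x y : ℝ} (hy : 0 < y) (hyx : y ≤ x) :
    (x * sin (1 / x) - y * sin (1 / y)) ^ 2 ≤ (x - y) * (x - y + 3 / 2) := by
  have hx : 0 < x := hy.trans_le hyx
  have hcos : 1 - cos (1 / x - 1 / y) ≤ 3 / 4 * (1 / y - 1 / x) := by
    rw [← cos_neg, neg_sub]
    exact one_sub_cos_le (sub_nonneg.2 (one_div_le_one_div_of_le hy hyx))
  calc (x * sin (1 / x) - y * sin (1 / y)) ^ 2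
      ≤ (x - y) ^ 2 + 2 * (x * y) * (1 - cos (1 / x - 1 / y)) :=
        sq_mul_sin_sub_mul_sin_le x y (1 / x) (1 / y)
    _ ≤ (x - y) ^ 2 + 2 * (x * y) * (3 / 4 * (1 / y - 1 / x)) := by gcongr
    _ = (x - y) * (x - y + 3 / 2) := by field_simp; ring

lemma mul_sin_one_div_le_one (x : ℝ) : x * sin (1 / x) ≤ 1 :=
  calc x * sin (1 / x) ≤ |x| * |sin (1 / x)| := (le_abs_self _).trans_eq (abs_mul _ _)
    _ ≤ |x| * |1 / x| := mul_le_mul_of_nonneg_left abs_sin_le_abs (abs_nonneg x)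
    _ = |x| * |x|⁻¹ := by rw [one_div, abs_inv]
    _ ≤ 1 := mul_inv_le_one

lemma mul_sin_one_div_nonneg {x : ℝ} (hx : 1 ≤ π * x) : 0 ≤ x * sin (1 / x) := by
  have hx₀ : 0 < x := pos_of_mul_pos_right (one_pos.trans_le hx) pi_pos.le
  exact mul_nonneg hx₀.le (sin_nonneg_of_nonneg_of_le_pi (by positivity) ((div_le_iff₀ hx₀).2 hx))

lemma neg_mul_sin_one_div_le {y : ℝ} (hy : 0 < y) (hπy : π * y ≤ 2) :
    -(y * sin (1 / y)) ≤ 3 / 4 - (1 + 3 * π / 8) * y := by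
  have hshift : 0 ≤ 1 / y - π / 2 := by
    rw [sub_nonneg, le_div_iff₀ hy]
    linarith
  have hcos := one_sub_cos_le hshift
  rw [cos_sub_pi_div_two] at hcos
  calc -(y * sin (1 / y)) = y * (1 - sin (1 / y)) - y := by ring
    _ ≤ y * (3 / 4 * (1 / y - π / 2)) - y := by gcongr
    _ = 3 / 4 - (1 + 3 * π / 8) * y := by field_simp; ring

lemma sq_one_sub_mul_sin_one_div_le {y : ℝ} (hy : 0 < y) (hneg : y * sin (1 / y) ≤ 0)
    (hπy : π * y ≤ 2) : (1 - y * sin (1 / y)) ^ 2 ≤ 2 * (1 - y) := by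
  have hle_self : -(y * sin (1 / y)) ≤ y := by nlinarith [neg_one_le_sin (1 / y)]
  have hle_line : -(y * sin (1 / y)) ≤ 3 / 4 - 2.178 * y := by
    nlinarith [neg_mul_sin_one_div_le hy hπy, pi_gt_d4]
  generalize y * sin (1 / y) = f at *
  have hmax : -f ≤ 0.236 := by linarith
  nlinarith [mul_nonneg (neg_nonneg.2 hneg) (sub_nonneg.2 hmax)]

lemma sq_mul_sin_one_div_sub_le_of_half_le {x y : ℝ} (hy : 0 < y) (hyx : 1 / 2 ≤ x - y) :
    (x * sin (1 / x) - y * sin (1 / y)) ^ 2 ≤ 2 * (x - y) := by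
  have hx_nonneg : 0 ≤ x * sin (1 / x) := mul_sin_one_div_nonneg (by nlinarith [pi_gt_three])
  have hx_le_one := mul_sin_one_div_le_one x
  have hx_le_self : x * sin (1 / x) ≤ x := mul_le_of_le_one_right (by linarith) (sin_le_one _)
  have hy_le_one := mul_sin_one_div_le_one y
  rcases le_or_gt (x * sin (1 / x) - y * sin (1 / y)) 1 with hD | hD
  · have : (x * sin (1 / x) - y * sin (1 / y)) ^ 2 ≤ 1 :=
      (sq_le_one_iff_abs_le_one _).2 (abs_le.2 ⟨by linarith, hD⟩)
    linarith
  · have hy_neg : y * sin (1 / y) < 0 := by linarith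
    have hπy : π * y < 1 := lt_of_not_ge fun h ↦ hy_neg.not_ge (mul_sin_one_div_nonneg h)
    have hm := sq_one_sub_mul_sin_one_div_le hy hy_neg.le (by linarith)
    have hD_sq : (x * sin (1 / x) - y * sin (1 / y) - 1) ^ 2 ≤ (-(y * sin (1 / y))) ^ 2 :=
      pow_le_pow_left₀ (by linarith) (by linarith) 2
    linarith

lemma sq_mul_sin_one_div_sub_le {x y : ℝ} (hy : 0 < y) (hyx : y ≤ x) :
    (x * sin (1 / x) - y * sin (1 / y)) ^ 2 ≤ 2 * (x - y) := by
  rcases le_total (1 / 2) (x - y) with h | h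
  · exact sq_mul_sin_one_div_sub_le_of_half_le hy h
  · nlinarith [sq_mul_sin_one_div_sub_le_mul_add hy hyx]

lemma abs_mul_sin_one_div_abs (x : ℝ) : |x| * sin (1 / |x|) = x * sin (1 / x) := by
  rcases abs_choice x with h | h <;> simp [h, div_neg]

theorem holder_estimate_general {x y : ℝ} (hx : x ≠ 0) (hy : y ≠ 0) :
    |x * sin (1 / x) - y * sin (1 / y)| ≤ √(2 * |x - y|) := by
  wlog hyx : |y| ≤ |x| generalizing x y
  · rw [abs_sub_comm, abs_sub_comm x]
    exact this hy hx (le_of_not_ge hyx)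
  apply abs_le_sqrt
  rw [← abs_mul_sin_one_div_abs x, ← abs_mul_sin_one_div_abs y]
  calc (|x| * sin (1 / |x|) - |y| * sin (1 / |y|)) ^ 2
      ≤ 2 * (|x| - |y|) := sq_mul_sin_one_div_sub_le (abs_pos.2 hy) hyx
    _ ≤ 2 * |x - y| := by gcongr; exact abs_sub_abs_le_abs_sub x y

end

theorem holder_estimate (x y : ℝ) (hx : 0 < x) (hy : 0 < y) :
    |x * Real.sin (1 / x) - y * Real.sin (1 / y)| ≤ Real.sqrt (2 * |x - y|) :=
  holder_estimate_general hx.ne' hy.ne'
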